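/- Let H = (A, B, E) be a finite bipartite graph with minimum degree at least δ (δ ≥ 1 an integer), let x ≥ 2 and 0 ≤ s ≤ 1 be real numbers. Then T̃_H(x,0) · T̃_H(0,x) ≥ Π_{v ∈ V(H)} G(d_v, x, s, γ_{x,s}(δ)) ≥ Π_{v ∈ V(H)} G(d_v, x, s, s). -/

import Mathlib

open scoped Classical

/-- The permutation Tutte polynomial of a bipartite graph `G` on finite vertex set `V`
with bipartition class `A` (the other class being `Aᶜ`). -/
noncomputable def permTutte {V : Type*} [Fintype V] [DecidableEq V]
    (G : SimpleGraph V) (A : Set V) (x y : ℝ) : ℝ :=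
  ((Fintype.card V).factorial : ℝ)⁻¹ *
    ∑ π : V ≃ Fin (Fintype.card V),
      x ^ Nat.card {i : V // i ∈ A ∧ ∀ j, G.Adj i j → π j < π i} *
      y ^ Nat.card {j : V // j ∉ A ∧ ∀ i, G.Adj j i → π i < π j}

/-- `G` is bipartite with parts `A` and `Aᶜ`. -/
def IsBipartition {V : Type*} (G : SimpleGraph V) (A : Set V) : Prop :=
  ∀ u v, G.Adj u v → (u ∈ A ↔ v ∉ A)

/-- `γ_{x,s}(d) = (d+x)s / ((d+x)s + (d+1)x(1−s))`. -/
noncomputable def gam (x s d : ℝ) : ℝ :=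
  ((d + x) * s) / ((d + x) * s + (d + 1) * x * (1 - s))

/-- `G(d,x,s,γ) = ((d+x)s/(d+1) + x(1−s)) · (s − (s/(d+1))γ^d)`. -/
noncomputable def Gfun (d : ℕ) (x s γ : ℝ) : ℝ :=
  (((d : ℝ) + x) * s / ((d : ℝ) + 1) + x * (1 - s)) *
    (s - s / ((d : ℝ) + 1) * γ ^ d)

/-!
The order of i.i.d. labels is a uniform permutation up to ties, so `permTutte G A x 0` is the limit,
as `N → ∞`, of the mean of `∏ v, activityFactor G A x v` over uniform labels in `Fin N`.
Each factor is increasing in the labels of `A` and decreasing in those of `Aᶜ`.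

Call a label high if it lies above the `s`-quantile and condition on which vertices are high;
discard the cells in which some vertex outside `A` is high. In each remaining cell the Harris
inequality bounds the mean of the product below by the product of the means, and these are
explicit: a high vertex of `A` is active, a low one is at least as likely to be active as a
uniform maximum of its closed neighbourhood, and a vertex outside `A` can only be active when all
its neighbours are low. The bound is a product of functions of the Boolean field of high vertices.
Reweighting the field by the gains of the vertices of `A` makes a vertex `u` of `A` low with
probability `γ_{x,s}(d_u)`, and the Harris inequality for the reweighted field gives
`oneSidedBound G A x s ≤ permTutte G A x 0`. Multiplying the bounds for `A` and `Aᶜ` and using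
that `γ_{x,s}` is decreasing finishes the proof.
-/

open Finset Filter Topology

section WeightedSum

variable {ι : Type*} [Fintype ι] [DecidableEq ι] {α : ι → Type*} [∀ i, Fintype (α i)]

/-- The expectation with respect to the product of the weights `w i`, as a linear functional.
The weights need not be normalised: the total mass is `∏ i, ∑ l, w i l`. -/
noncomputable def weightedSum (w : ∀ i, α i → ℝ) : ((∀ i, α i) → ℝ) →ₗ[ℝ] ℝ :=
  ∑ a, (∏ i, w i (a i)) • LinearMap.proj a

lemma weightedSum_apply (w : ∀ i, α i → ℝ) (f : (∀ i, α i) → ℝ) :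
    weightedSum w f = ∑ a, (∏ i, w i (a i)) * f a := by
  simp [weightedSum]

lemma weightedSum_one (w : ∀ i, α i → ℝ) : weightedSum w 1 = ∏ i, ∑ l, w i l := by
  simp [weightedSum_apply, Fintype.prod_sum]

lemma weightedSum_congr {w : ∀ i, α i → ℝ} {f g : (∀ i, α i) → ℝ}
    (hfg : ∀ a, (∀ i, w i (a i) ≠ 0) → f a = g a) : weightedSum w f = weightedSum w g := by
  simp only [weightedSum_apply]
  refine sum_congr rfl fun a _ => ?_
  by_cases ha : ∏ i, w i (a i) = 0
  · simp [ha]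
  · rw [hfg a fun i => prod_ne_zero_iff.1 ha i (mem_univ i)]

lemma weightedSum_mono {w : ∀ i, α i → ℝ} (hw : 0 ≤ w) :
    Monotone (weightedSum w) := fun f g hfg => by
  simp only [weightedSum_apply]
  exact sum_le_sum fun a _ => mul_le_mul_of_nonneg_left (hfg a) (prod_nonneg fun i _ => hw i _)

lemma weightedSum_nonneg {w : ∀ i, α i → ℝ} (hw : 0 ≤ w) {f : (∀ i, α i) → ℝ} (hf : 0 ≤ f) :
    0 ≤ weightedSum w f := by
  simpa using weightedSum_mono hw hf

lemma weightedSum_indicator_pi (w : ∀ i, α i → ℝ) (S : Finset ι) (E : ∀ i, Set (α i)) (γ : ι → ℝ)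
    (hγ : ∀ i ∈ S, ∑ l, (E i).indicator (w i) l = γ i * ∑ l, w i l) :
    weightedSum w (((S : Set ι).pi E).indicator 1) = (∏ i ∈ S, γ i) * ∏ i, ∑ l, w i l := by
  calc weightedSum w (((S : Set ι).pi E).indicator 1)
      = ∑ a : ∀ i, α i, ∏ i, if i ∈ S then (E i).indicator (w i) (a i) else w i (a i) := by
        rw [weightedSum_apply]
        refine sum_congr rfl fun a _ => ?_
        rw [Set.indicator_pi_one_apply, ← Fintype.prod_ite_mem S, ← prod_mul_distrib]
        refine prod_congr rfl fun i _ => ?_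
        by_cases hi : i ∈ S <;> simp [hi, Set.indicator]
    _ = ∏ i, (if i ∈ S then γ i else 1) * ∑ l, w i l := by
        rw [← Fintype.prod_sum fun i l => if i ∈ S then (E i).indicator (w i) l else w i l]
        refine prod_congr rfl fun i _ => ?_
        by_cases hi : i ∈ S <;> simp [hi, hγ]
    _ = (∏ i ∈ S, γ i) * ∏ i, ∑ l, w i l := by rw [prod_mul_distrib, Fintype.prod_ite_mem]

lemma weightedSum_eq_sum_weightedSum {κ : ι → Type*} [∀ i, Fintype (κ i)]
    (w : ∀ i, κ i → α i → ℝ) (f : (∀ i, α i) → ℝ) :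
    weightedSum (fun i l => ∑ c, w i c l) f =
      ∑ c : ∀ i, κ i, weightedSum (fun i => w i (c i)) f := by
  simp only [weightedSum_apply, Fintype.prod_sum, sum_mul]
  exact sum_comm

section Harris

variable [∀ i, LinearOrder (α i)] {w : ∀ i, α i → ℝ}

lemma weightedSum_mul_weightedSum_le (hw : 0 ≤ w) {f g : (∀ i, α i) → ℝ} (hf₀ : 0 ≤ f)
    (hg₀ : 0 ≤ g) (hf : Monotone f) (hg : Monotone g) :
    weightedSum w f * weightedSum w g ≤ weightedSum w 1 * weightedSum w (f * g) := by
  simp only [weightedSum_apply, Pi.one_apply, mul_one, Pi.mul_apply]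
  refine fkg f g (fun a => ∏ i, w i (a i)) (fun a => prod_nonneg fun i _ => hw i _)
    hf₀ hg₀ hf hg fun a b => ?_
  simp only [← prod_mul_distrib]
  refine (prod_congr rfl fun i _ => ?_).le
  rcases le_total (a i) (b i) with h | h <;> simp [h, mul_comm]

lemma prod_mul_weightedSum_one_le {κ : Type*} (hw : 0 ≤ w) {φ : κ → (∀ i, α i) → ℝ}
    (hφ₀ : ∀ k, 0 ≤ φ k) (hφ : ∀ k, Monotone (φ k)) {m : κ → ℝ} (hm₀ : 0 ≤ m)
    (hm : ∀ k, m k * weightedSum w 1 ≤ weightedSum w (φ k)) (S : Finset κ) :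
    (∏ k ∈ S, m k) * weightedSum w 1 ≤ weightedSum w (∏ k ∈ S, φ k) := by
  have hprod₀ (S : Finset κ) : 0 ≤ ∏ k ∈ S, φ k := prod_nonneg fun k _ => hφ₀ k
  have hprod (S : Finset κ) : Monotone (∏ k ∈ S, φ k) := fun a b hab => by
    simp only [prod_apply]
    exact prod_le_prod (fun k _ => hφ₀ k a) fun k _ => hφ k hab
  have hmass : 0 ≤ weightedSum w 1 := weightedSum_nonneg hw zero_le_one
  rcases hmass.eq_or_lt with hzero | hpos
  · rw [← hzero, mul_zero]
    exact weightedSum_nonneg hw (hprod₀ S)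
  induction S using Finset.induction_on with
  | empty => simp
  | insert k S hk ih =>
    rw [prod_insert hk, prod_insert hk]
    refine le_of_mul_le_mul_left ?_ hpos
    calc weightedSum w 1 * ((m k * ∏ k ∈ S, m k) * weightedSum w 1)
        = (m k * weightedSum w 1) * ((∏ k ∈ S, m k) * weightedSum w 1) := by ring
      _ ≤ weightedSum w (φ k) * weightedSum w (∏ k ∈ S, φ k) :=
        mul_le_mul (hm k) ih (mul_nonneg (prod_nonneg fun k _ => hm₀ k) hmass)
          (weightedSum_nonneg hw (hφ₀ k))
      _ ≤ weightedSum w 1 * weightedSum w (φ k * ∏ k ∈ S, φ k) :=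
        weightedSum_mul_weightedSum_le hw (hφ₀ k) (hprod₀ S) (hφ k) (hprod S)

end Harris

end WeightedSum

section IdenticalCoordinates

variable {V α : Type*} [Fintype V] [DecidableEq V] [Fintype α]

/-- Monotonicity for the product order that is reversed on the coordinates outside `A`. -/
def TwistedMonotone [LE α] (A : Set V) (f : (V → α) → ℝ) : Prop :=
  ∀ a b : V → α, (∀ v ∈ A, a v ≤ b v) → (∀ v ∉ A, b v ≤ a v) → f a ≤ f b

lemma prod_mul_weightedSum_one_le_of_twistedMonotone {κ : Type*} [LinearOrder α] (A : Set V)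
    {w : V → α → ℝ} (hw : 0 ≤ w) {φ : κ → (V → α) → ℝ} (hφ₀ : ∀ k, 0 ≤ φ k)
    (hφ : ∀ k, TwistedMonotone A (φ k)) {m : κ → ℝ} (hm₀ : 0 ≤ m)
    (hm : ∀ k, m k * weightedSum w 1 ≤ weightedSum w (φ k)) (S : Finset κ) :
    (∏ k ∈ S, m k) * weightedSum w 1 ≤ weightedSum w (∏ k ∈ S, φ k) := by
  let order (v : V) : LinearOrder α :=
    if v ∈ A then inferInstance else inferInstanceAs (LinearOrder αᵒᵈ)
  refine @prod_mul_weightedSum_one_le V _ _ (fun _ => α) _ order w κ hw φ hφ₀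
    (fun k a b hab => hφ k a b (fun v hv => ?_) fun v hv => ?_) m hm₀ hm S
  · have h : (order v).le (a v) (b v) := hab v
    rwa [show order v = _ from if_pos hv] at h
  · have h : (order v).le (a v) (b v) := hab v
    rwa [show order v = _ from if_neg hv] at h

lemma weightedSum_comp_perm {w : V → α → ℝ} {σ : Equiv.Perm V} (hσ : ∀ v, w (σ v) = w v)
    (f : (V → α) → ℝ) : weightedSum w (fun a => f (a ∘ σ)) = weightedSum w f := by
  simp only [weightedSum_apply]
  refine Fintype.sum_equiv (Equiv.arrowCongr σ.symm (Equiv.refl α)) _ _ fun a => ?_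
  rw [← Equiv.prod_comp σ]
  simp only [hσ]
  rfl

/-- The event that, among the coordinates in `T`, the `i`-th one dominates all others with respect
to `R`; for `R = (· ≤ ·)` or `R = (· < ·)` it is a weak or strict maximum. -/
def dominates (R : α → α → Prop) (T : Finset V) (i : V) : Set (V → α) :=
  {a | ∀ u ∈ T, u ≠ i → R (a u) (a i)}

lemma weightedSum_dominates_eq (R : α → α → Prop) {w : V → α → ℝ} {T : Finset V} {i k : V}
    (hw : ∀ v ∈ T, w v = w i) (hi : i ∈ T) (hk : k ∈ T) :
    weightedSum w ((dominates R T k).indicator 1) =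
      weightedSum w ((dominates R T i).indicator 1) := by
  have hwσ (v : V) : w (Equiv.swap i k v) = w v := by
    rw [Equiv.swap_apply_def]
    split_ifs with hvi hvk
    · rw [hvi, hw k hk]
    · rw [hvk, hw k hk]
    · rfl
  have hT (v : V) : Equiv.swap i k v ∈ T ↔ v ∈ T := by
    rw [Equiv.swap_apply_def]
    split_ifs with hvi hvk <;> simp [*]
  rw [← weightedSum_comp_perm hwσ]
  congr 1
  ext a
  have hmem : a ∘ Equiv.swap i k ∈ dominates R T k ↔ a ∈ dominates R T i := by
    simp only [dominates, Set.mem_ofPred_eq]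
    rw [← (Equiv.swap i k).forall_congr_right]
    simp [hT, Equiv.swap_apply_eq_iff]
  simp only [Set.indicator, hmem]
  simp

lemma card_mul_weightedSum_dominates (R : α → α → Prop) {w : V → α → ℝ} {T : Finset V} {i : V}
    (hw : ∀ v ∈ T, w v = w i) (hi : i ∈ T) :
    #T * weightedSum w ((dominates R T i).indicator 1) =
      weightedSum w (∑ k ∈ T, (dominates R T k).indicator 1) := by
  rw [map_sum, sum_congr rfl fun k hk => weightedSum_dominates_eq R hw hi hk, sum_const,
    nsmul_eq_mul]

variable [LinearOrder α]

lemma weightedSum_one_le_card_mul_dominates {w : V → α → ℝ} (hw₀ : 0 ≤ w) {T : Finset V} {i : V}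
    (hw : ∀ v ∈ T, w v = w i) (hi : i ∈ T) :
    weightedSum w 1 ≤ #T * weightedSum w ((dominates (· ≤ ·) T i).indicator 1) := by
  rw [card_mul_weightedSum_dominates _ hw hi]
  refine weightedSum_mono hw₀ fun a => ?_
  obtain ⟨k, hk, hmax⟩ := exists_max_image T a ⟨i, hi⟩
  have hdom : a ∈ dominates (· ≤ ·) T k := fun u hu _ => hmax u hu
  calc (1 : ℝ) = (dominates (· ≤ ·) T k).indicator 1 a := by simp [hdom]
    _ ≤ ∑ j ∈ T, (dominates (· ≤ ·) T j).indicator 1 a :=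
      single_le_sum (fun j _ => Set.indicator_nonneg (fun _ _ => zero_le_one) a) hk
    _ = _ := (Finset.sum_apply _ _ _).symm

lemma card_mul_dominates_le_weightedSum_one {w : V → α → ℝ} (hw₀ : 0 ≤ w) {T : Finset V} {i : V}
    (hw : ∀ v ∈ T, w v = w i) (hi : i ∈ T) :
    #T * weightedSum w ((dominates (· < ·) T i).indicator 1) ≤ weightedSum w 1 := by
  rw [card_mul_weightedSum_dominates _ hw hi]
  refine weightedSum_mono hw₀ fun a => ?_
  have hunique : #{k ∈ T | a ∈ dominates (· < ·) T k} ≤ 1 := by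
    refine card_le_one.2 fun p hp q hq => ?_
    rw [mem_filter] at hp hq
    by_contra hne
    exact lt_asymm (hp.2 q hq.1 (Ne.symm hne)) (hq.2 p hp.1 hne)
  simpa [Set.indicator] using hunique

end IdenticalCoordinates

section ClosedNeighborhood

variable {V α : Type*} [Fintype V] [DecidableEq V] {G : SimpleGraph V} [DecidableRel G.Adj]

lemma dominates_insert_neighborFinset (R : α → α → Prop) (v : V) :
    dominates R (insert v (G.neighborFinset v)) v = {f | ∀ u, G.Adj v u → R (f u) (f v)} := by
  ext f
  simp only [dominates, Set.mem_ofPred_eq, mem_insert, SimpleGraph.mem_neighborFinset]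
  exact ⟨fun h u hu => h u (Or.inr hu) hu.ne', fun h u hu hne => h u (hu.resolve_left hne)⟩

lemma card_insert_neighborFinset (v : V) :
    (#(insert v (G.neighborFinset v)) : ℝ) = G.degree v + 1 := by
  rw [card_insert_of_notMem (by simp), SimpleGraph.card_neighborFinset_eq_degree]
  push_cast
  rfl

end ClosedNeighborhood

section ActivityFactor

variable {V α : Type*} [LinearOrder α] {G : SimpleGraph V} {A : Set V} {x : ℝ} {v : V}

/-- The contribution of the vertex `v` to `permTutte G A x 0` under the labelling `f`. Active
vertices of `A` are allowed ties and those outside `A` are not; this is what makes the factor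
monotone in the labels, and it is immaterial for injective labellings. -/
noncomputable def activityFactor (G : SimpleGraph V) (A : Set V) (x : ℝ) (v : V) (f : V → α) : ℝ :=
  if v ∈ A then (if ∀ u, G.Adj v u → f u ≤ f v then x else 1)
  else (if ∀ u, G.Adj v u → f u < f v then 0 else 1)

lemma activityFactor_of_mem (hv : v ∈ A) :
    (activityFactor G A x v : (V → α) → ℝ) =
      1 + (x - 1) • {f | ∀ u, G.Adj v u → f u ≤ f v}.indicator 1 := by
  ext f
  simp only [activityFactor, if_pos hv, Pi.add_apply, Pi.one_apply, Pi.smul_apply, smul_eq_mul,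
    Set.indicator, Set.mem_ofPred_eq]
  split_ifs <;> ring

lemma activityFactor_of_notMem (hv : v ∉ A) :
    (activityFactor G A x v : (V → α) → ℝ) =
      1 - {f | ∀ u, G.Adj v u → f u < f v}.indicator 1 := by
  ext f
  simp only [activityFactor, if_neg hv, Pi.sub_apply, Pi.one_apply, Set.indicator,
    Set.mem_ofPred_eq]
  split_ifs <;> ring

lemma activityFactor_nonneg (hx : 0 ≤ x) :
    (0 : (V → α) → ℝ) ≤ activityFactor G A x v := fun f => by
  simp only [activityFactor, Pi.zero_apply]
  split_ifs <;> linarith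

lemma activityFactor_le (hx : 1 ≤ x) (f : V → α) : activityFactor G A x v f ≤ x := by
  unfold activityFactor
  split_ifs <;> linarith

lemma activityFactor_congr {β : Type*} [LinearOrder β] {f : V → α} {g : V → β}
    (hfg : ∀ u v, f u ≤ f v ↔ g u ≤ g v) :
    activityFactor G A x v f = activityFactor G A x v g := by
  have hfg' (u v : V) : f u < f v ↔ g u < g v := by rw [← not_le, ← not_le, hfg]
  simp only [activityFactor, hfg, hfg']

lemma twistedMonotone_activityFactor (hbip : IsBipartition G A) (hx : 1 ≤ x) :
    TwistedMonotone A (activityFactor G A x v : (V → α) → ℝ) := by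
  intro a b hA hAc
  unfold activityFactor
  by_cases hv : v ∈ A
  · have hactive (h : ∀ u, G.Adj v u → a u ≤ a v) : ∀ u, G.Adj v u → b u ≤ b v := fun u hu =>
      (hAc u ((hbip v u hu).1 hv)).trans ((h u hu).trans (hA v hv))
    simp only [if_pos hv]
    split_ifs <;> first | linarith | tauto
  · have hactive (h : ∀ u, G.Adj v u → b u < b v) : ∀ u, G.Adj v u → a u < a v := fun u hu =>
      (hA u (not_not.1 fun huA => hv ((hbip v u hu).2 huA))).trans_lt
        ((h u hu).trans_le (hAc v hv))
    simp only [if_neg hv]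
    split_ifs <;> first | linarith | tauto

variable [Fintype V] [DecidableEq V] [Fintype α] [DecidableRel G.Adj] {w : V → α → ℝ}

lemma mul_weightedSum_one_le_activityFactor_of_mem (hw₀ : 0 ≤ w)
    (hw : ∀ u, G.Adj v u → w u = w v) (hx : 1 ≤ x) (hv : v ∈ A) :
    (G.degree v + x) / (G.degree v + 1) * weightedSum w 1 ≤
      weightedSum w (activityFactor G A x v) := by
  have hmax := weightedSum_one_le_card_mul_dominates hw₀ (T := insert v (G.neighborFinset v))
    (i := v) (by simpa using hw) (mem_insert_self _ _)
  rw [card_insert_neighborFinset, dominates_insert_neighborFinset] at hmax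
  rw [activityFactor_of_mem hv, map_add, map_smul, smul_eq_mul, div_mul_eq_mul_div,
    div_le_iff₀ (by positivity)]
  linarith [mul_le_mul_of_nonneg_left hmax (sub_nonneg.2 hx)]

lemma mul_weightedSum_one_le_activityFactor_of_notMem (hw₀ : 0 ≤ w)
    (hw : ∀ u, G.Adj v u → w u = w v) (hv : v ∉ A) :
    G.degree v / (G.degree v + 1) * weightedSum w 1 ≤
      weightedSum w (activityFactor G A x v) := by
  have hmax := card_mul_dominates_le_weightedSum_one hw₀ (T := insert v (G.neighborFinset v))
    (i := v) (by simpa using hw) (mem_insert_self _ _)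
  rw [card_insert_neighborFinset, dominates_insert_neighborFinset] at hmax
  rw [activityFactor_of_notMem hv, map_sub, div_mul_eq_mul_div, div_le_iff₀ (by positivity)]
  linarith

end ActivityFactor

section GFactors

variable {x s d : ℝ}

lemma gam_denom_pos (hx : 1 ≤ x) (hd : 0 ≤ d) (hs₀ : 0 ≤ s) (hs₁ : s ≤ 1) :
    0 < (d + x) * s + (d + 1) * x * (1 - s) := by
  have hlow : s ≤ (d + x) * s := le_mul_of_one_le_left hs₀ (by linarith)
  have hhigh : 1 - s ≤ (d + 1) * x * (1 - s) :=
    le_mul_of_one_le_left (sub_nonneg.2 hs₁) (one_le_mul_of_one_le_of_one_le (by linarith) hx)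
  linarith

lemma gam_nonneg (hx : 1 ≤ x) (hd : 0 ≤ d) (hs₀ : 0 ≤ s) (hs₁ : s ≤ 1) : 0 ≤ gam x s d :=
  div_nonneg (by positivity) (gam_denom_pos hx hd hs₀ hs₁).le

lemma gam_zero (hx : x ≠ 0) : gam x s 0 = s := by
  unfold gam
  have hden : (0 + x) * s + (0 + 1) * x * (1 - s) = x := by ring
  rw [hden, zero_add, mul_div_cancel_left₀ s hx]

lemma gam_antitoneOn (hx : 1 ≤ x) (hs₀ : 0 ≤ s) (hs₁ : s ≤ 1) :
    AntitoneOn (gam x s) (Set.Ici 0) := fun d hd d' hd' hdd' => by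
  unfold gam
  rw [div_le_div_iff₀ (gam_denom_pos hx hd' hs₀ hs₁) (gam_denom_pos hx hd hs₀ hs₁)]
  have : 0 ≤ s * (1 - s) * x * (x - 1) * (d' - d) := by
    have := sub_nonneg.2 hs₁
    have := sub_nonneg.2 hx
    have := sub_nonneg.2 hdd'
    positivity
  linarith

lemma gam_le_self (hx : 1 ≤ x) (hd : 0 ≤ d) (hs₀ : 0 ≤ s) (hs₁ : s ≤ 1) : gam x s d ≤ s :=
  (gam_antitoneOn hx hs₀ hs₁ Set.self_mem_Ici hd hd).trans_eq (gam_zero (by positivity))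

lemma continuousAt_gam (hx : 1 ≤ x) (hd : 0 ≤ d) (hs₀ : 0 ≤ s) (hs₁ : s ≤ 1) :
    ContinuousAt (fun t => gam x t d) s :=
  ContinuousAt.div (by fun_prop) (by fun_prop) (gam_denom_pos hx hd hs₀ hs₁).ne'

lemma Gfun_antitoneOn (d : ℕ) (hx : 0 ≤ x) (hs₀ : 0 ≤ s) (hs₁ : s ≤ 1) :
    AntitoneOn (Gfun d x s) (Set.Ici 0) := fun γ hγ γ' _ hγγ' => by
  have := sub_nonneg.2 hs₁
  unfold Gfun
  gcongr

lemma Gfun_nonneg {d : ℕ} {γ : ℝ} (hx : 0 ≤ x) (hs₀ : 0 ≤ s) (hs₁ : s ≤ 1) (hγ₀ : 0 ≤ γ)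
    (hγ₁ : γ ≤ 1) : 0 ≤ Gfun d x s γ := by
  have := sub_nonneg.2 hs₁
  have hle : s / (d + 1) * γ ^ d ≤ s :=
    (mul_le_of_le_one_right (by positivity) (pow_le_one₀ hγ₀ hγ₁)).trans
      (div_le_self hs₀ (by linarith [d.cast_nonneg (α := ℝ)]))
  exact mul_nonneg (by positivity) (sub_nonneg.2 hle)

end GFactors

section Cells

variable {V α : Type*} {μ : α → ℝ} {high : α → Bool}

/-- The label weight `μ` restricted to the low labels (`b = false`) or the high labels
(`b = true`). A cell is a choice `c : V → Bool` of low or high for every vertex. -/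
noncomputable def cellWeight (μ : α → ℝ) (high : α → Bool) (b : Bool) (l : α) : ℝ :=
  if high l = b then μ l else 0

lemma sum_cellWeight (l : α) : ∑ b, cellWeight μ high b l = μ l := by
  simp [cellWeight]

lemma cellWeight_nonneg (hμ : 0 ≤ μ) (c : V → Bool) :
    (0 : V → α → ℝ) ≤ fun v => cellWeight μ high (c v) := fun v l => by
  simp only [cellWeight, Pi.zero_apply]
  split_ifs
  exacts [hμ l, le_rfl]

lemma high_eq_of_cellWeight_ne_zero {b : Bool} {l : α} (h : cellWeight μ high b l ≠ 0) :
    high l = b :=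
  (ite_ne_right_iff.1 h).1

variable [Fintype V] {G : SimpleGraph V} [DecidableRel G.Adj] {A : Set V} {x : ℝ} {c : V → Bool}
  {v : V}

/-- The part of the lower bound for the mean activity factor of `v` on a cell that depends on the
cell through `v` alone. It is zero when a vertex outside `A` is high: such cells are discarded. -/
noncomputable def cellGain (G : SimpleGraph V) [DecidableRel G.Adj] (A : Set V) (x : ℝ) (v : V)
    (b : Bool) : ℝ :=
  if v ∈ A then (if b then x else (G.degree v + x) / (G.degree v + 1)) else (if b then 0 else 1)

/-- The lower bound for the mean activity factor of a low vertex `v ∉ A` on the cell `c`, and `1`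
for `v ∈ A`. -/
noncomputable def cellSurvival (G : SimpleGraph V) [DecidableRel G.Adj] (A : Set V) (v : V)
    (c : V → Bool) : ℝ :=
  if v ∉ A ∧ ∀ u, G.Adj v u → c u = false then (G.degree v : ℝ) / (G.degree v + 1) else 1

lemma cellGain_nonneg (hx : 0 ≤ x) (b : Bool) : 0 ≤ cellGain G A x v b := by
  unfold cellGain
  split_ifs <;> positivity

lemma cellSurvival_nonneg : 0 ≤ cellSurvival G A v := fun c => by
  simp only [cellSurvival, Pi.zero_apply]
  split_ifs <;> positivity

lemma monotone_cellSurvival : Monotone (cellSurvival G A v) := fun c c' hcc' => by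
  have hlow (h : ∀ u, G.Adj v u → c' u = false) (u : V) (hu : G.Adj v u) : c u = false :=
    le_bot_iff.1 ((hcc' u).trans (h u hu).le)
  have hle : (G.degree v : ℝ) / (G.degree v + 1) ≤ 1 :=
    div_le_one_of_le₀ (by linarith) (by positivity)
  unfold cellSurvival
  split_ifs <;> first | linarith | tauto

lemma cellSurvival_of_mem (hv : v ∈ A) : cellSurvival G A v = 1 := by
  ext c
  simp [cellSurvival, hv]

lemma cellSurvival_of_notMem (hv : v ∉ A) :
    cellSurvival G A v = 1 - (1 / (G.degree v + 1) : ℝ) •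
      ((G.neighborFinset v : Set V).pi fun _ => {false}).indicator 1 := by
  ext c
  have hpos : (G.degree v : ℝ) + 1 ≠ 0 := by positivity
  simp only [cellSurvival, hv, not_false_eq_true, true_and, Pi.sub_apply, Pi.one_apply,
    Pi.smul_apply, smul_eq_mul, Set.indicator, Set.mem_pi, mem_coe, SimpleGraph.mem_neighborFinset,
    Set.mem_singleton_iff]
  split_ifs <;> field_simp <;> ring

variable [DecidableEq V] [Fintype α] [LinearOrder α]

lemma cellGain_mul_weightedSum_one_le (hbip : IsBipartition G A) (hx : 1 ≤ x) (hμ : 0 ≤ μ)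
    (hhigh : Monotone high) (hc : ∀ u ∉ A, c u = false) (hv : v ∈ A) :
    cellGain G A x v (c v) * weightedSum (fun u => cellWeight μ high (c u)) 1 ≤
      weightedSum (fun u => cellWeight μ high (c u)) (activityFactor G A x v) := by
  have hlow (u : V) (hu : G.Adj v u) : c u = false := hc u ((hbip v u hu).1 hv)
  cases hcv : c v with
  | false =>
    simp only [cellGain, if_pos hv, Bool.false_eq_true, if_false]
    exact mul_weightedSum_one_le_activityFactor_of_mem (cellWeight_nonneg hμ c)
      (fun u hu => by rw [hlow u hu, hcv]) hx hv
  | true =>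
    simp only [cellGain, if_pos hv, if_true]
    rw [← smul_eq_mul, ← map_smul]
    refine (weightedSum_congr fun a ha => ?_).le
    have hactive (u : V) (hu : G.Adj v u) : a u ≤ a v := by
      have hau := high_eq_of_cellWeight_ne_zero (ha u)
      have hav := high_eq_of_cellWeight_ne_zero (ha v)
      rw [hlow u hu] at hau
      rw [hcv] at hav
      exact (hhigh.reflect_lt (by simp [hau, hav])).le
    simp [activityFactor, hv, if_pos hactive]

lemma cellSurvival_mul_weightedSum_one_le (hμ : 0 ≤ μ) (hhigh : Monotone high) (hv : v ∉ A)
    (hcv : c v = false) :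
    cellSurvival G A v c * weightedSum (fun u => cellWeight μ high (c u)) 1 ≤
      weightedSum (fun u => cellWeight μ high (c u)) (activityFactor G A x v) := by
  by_cases hlow : ∀ u, G.Adj v u → c u = false
  · rw [cellSurvival, if_pos ⟨hv, hlow⟩]
    exact mul_weightedSum_one_le_activityFactor_of_notMem (cellWeight_nonneg hμ c)
      (fun u hu => by rw [hlow u hu, hcv]) hv
  · rw [cellSurvival, if_neg fun h => hlow h.2, one_mul]
    refine (weightedSum_congr fun a ha => ?_).le
    push Not at hlow
    obtain ⟨u, hu, hcu⟩ := hlow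
    have hinactive : ¬ ∀ u, G.Adj v u → a u < a v := fun h => by
      have hle := hhigh (h u hu).le
      rw [high_eq_of_cellWeight_ne_zero (ha u), high_eq_of_cellWeight_ne_zero (ha v), hcv] at hle
      exact hcu (le_bot_iff.1 hle)
    simp [activityFactor, hv, if_neg hinactive]

lemma prod_cell_mul_weightedSum_one_le (hbip : IsBipartition G A) (hx : 1 ≤ x) (hμ : 0 ≤ μ)
    (hhigh : Monotone high) (hc : ∀ u ∉ A, c u = false) :
    (∏ v, cellGain G A x v (c v) * cellSurvival G A v c) *
        weightedSum (fun u => cellWeight μ high (c u)) 1 ≤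
      weightedSum (fun u => cellWeight μ high (c u)) (∏ v, activityFactor G A x v) := by
  have hx₀ : 0 ≤ x := zero_le_one.trans hx
  refine prod_mul_weightedSum_one_le_of_twistedMonotone A (cellWeight_nonneg hμ c)
    (fun v => activityFactor_nonneg hx₀) (fun v => twistedMonotone_activityFactor hbip hx)
    (fun v => mul_nonneg (cellGain_nonneg hx₀ _) (cellSurvival_nonneg c)) (fun v => ?_) univ
  by_cases hv : v ∈ A
  · simpa [cellSurvival_of_mem hv] using cellGain_mul_weightedSum_one_le hbip hx hμ hhigh hc hv
  · simpa [cellGain, hv, hc v hv] using cellSurvival_mul_weightedSum_one_le hμ hhigh hv (hc v hv)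

end Cells

section OneSidedBound

variable {V : Type*} [Fintype V] {G : SimpleGraph V} [DecidableRel G.Adj] {A : Set V} {x t : ℝ}

lemma one_sub_prod_gam_div_nonneg (hx : 1 ≤ x) (ht₀ : 0 ≤ t) (ht₁ : t ≤ 1) (v : V) :
    0 ≤ 1 - (∏ u ∈ G.neighborFinset v, gam x t (G.degree u)) / (G.degree v + 1) := by
  have hprod : ∏ u ∈ G.neighborFinset v, gam x t (G.degree u) ≤ 1 :=
    prod_le_one (fun u _ => gam_nonneg hx (Nat.cast_nonneg _) ht₀ ht₁) fun u _ =>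
      (gam_le_self hx (Nat.cast_nonneg _) ht₀ ht₁).trans ht₁
  exact sub_nonneg.2 (div_le_one_of_le₀ (by linarith [(G.degree v).cast_nonneg (α := ℝ)])
    (by positivity))

/-- The lower bound for `permTutte G A x 0` obtained when the labels below the `s`-quantile are
declared low. The product of the bounds for `A` and `Aᶜ` is
`∏ v, G(d_v, x, s, ·)` with `γ ^ d_v` replaced by `∏ u ∈ N(v), γ_{x,s}(d_u)`. -/
noncomputable def oneSidedBound (G : SimpleGraph V) [DecidableRel G.Adj] (A : Set V)
    (x s : ℝ) : ℝ :=
  ∏ v, if v ∈ A then (G.degree v + x) * s / (G.degree v + 1) + x * (1 - s)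
    else s * (1 - (∏ u ∈ G.neighborFinset v, gam x s (G.degree u)) / (G.degree v + 1))

lemma oneSidedBound_nonneg (hx : 1 ≤ x) (ht₀ : 0 ≤ t) (ht₁ : t ≤ 1) :
    0 ≤ oneSidedBound G A x t := by
  have := sub_nonneg.2 ht₁
  refine prod_nonneg fun v _ => ?_
  split_ifs
  · positivity
  · exact mul_nonneg ht₀ (one_sub_prod_gam_div_nonneg hx ht₀ ht₁ v)

lemma continuousAt_oneSidedBound (hx : 1 ≤ x) (ht₀ : 0 ≤ t) (ht₁ : t ≤ 1) :
    ContinuousAt (oneSidedBound G A x) t := by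
  refine tendsto_finsetProd _ fun v _ => ?_
  have hgam : ContinuousAt (fun t => ∏ u ∈ G.neighborFinset v, gam x t (G.degree u)) t :=
    tendsto_finsetProd _ fun u _ => continuousAt_gam hx (Nat.cast_nonneg _) ht₀ ht₁
  split_ifs
  · exact ContinuousAt.tendsto (by fun_prop)
  · exact ContinuousAt.tendsto (by fun_prop)

lemma prod_Gfun_le_oneSidedBound_mul {δ : ℝ} (hδ : 0 ≤ δ) (hdeg : ∀ v, δ ≤ G.degree v)
    (hx : 1 ≤ x) (ht₀ : 0 ≤ t) (ht₁ : t ≤ 1) :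
    ∏ v, Gfun (G.degree v) x t (gam x t δ) ≤
      oneSidedBound G A x t * oneSidedBound G Aᶜ x t := by
  have hx₀ : 0 ≤ x := zero_le_one.trans hx
  have hγ₀ : 0 ≤ gam x t δ := gam_nonneg hx hδ ht₀ ht₁
  have hγ₁ : gam x t δ ≤ 1 := (gam_le_self hx hδ ht₀ ht₁).trans ht₁
  rw [oneSidedBound, oneSidedBound, ← prod_mul_distrib]
  refine prod_le_prod (fun v _ => Gfun_nonneg hx₀ ht₀ ht₁ hγ₀ hγ₁) fun v _ => ?_
  have hgam : ∏ u ∈ G.neighborFinset v, gam x t (G.degree u) ≤ gam x t δ ^ G.degree v :=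
    (prod_le_prod (fun u _ => gam_nonneg hx (Nat.cast_nonneg _) ht₀ ht₁) fun u _ =>
      gam_antitoneOn hx ht₀ ht₁ hδ (Set.mem_Ici.2 (Nat.cast_nonneg _)) (hdeg u)).trans_eq (by simp)
  calc Gfun (G.degree v) x t (gam x t δ)
      ≤ ((G.degree v + x) * t / (G.degree v + 1) + x * (1 - t)) *
        (t - t / (G.degree v + 1) * ∏ u ∈ G.neighborFinset v, gam x t (G.degree u)) := by
        have := sub_nonneg.2 ht₁
        unfold Gfun
        gcongr
    _ = _ := by
        by_cases hv : v ∈ A <;>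
          simp only [hv, Set.mem_compl_iff, if_true, if_false, not_true, not_false_eq_true] <;>
          ring

end OneSidedBound

section CoarseWeights

variable {V : Type*} [Fintype V] {G : SimpleGraph V} [DecidableRel G.Adj] {A : Set V} {x t : ℝ}
  {v : V}

/-- The weight of the value `b` at the vertex `v` once every cell has been averaged out: the total
weight `t` of the low labels, or `1 - t` of the high ones, times the gain of `v`. -/
noncomputable def coarseWeight (G : SimpleGraph V) [DecidableRel G.Adj] (A : Set V) (x t : ℝ)
    (v : V) (b : Bool) : ℝ :=
  (if b then 1 - t else t) * cellGain G A x v b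

lemma coarseWeight_nonneg (hx : 0 ≤ x) (ht₀ : 0 ≤ t) (ht₁ : t ≤ 1) :
    0 ≤ coarseWeight G A x t := fun v b => by
  refine mul_nonneg ?_ (cellGain_nonneg hx b)
  split_ifs
  exacts [sub_nonneg.2 ht₁, ht₀]

lemma sum_coarseWeight_of_mem (hv : v ∈ A) :
    ∑ b, coarseWeight G A x t v b =
      (G.degree v + x) * t / (G.degree v + 1) + x * (1 - t) := by
  simp only [Fintype.sum_bool, coarseWeight, cellGain, if_pos hv, Bool.false_eq_true, if_true,
    if_false]
  ring

lemma sum_coarseWeight_of_notMem (hv : v ∉ A) : ∑ b, coarseWeight G A x t v b = t := by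
  simp [coarseWeight, cellGain, hv]

lemma coarseWeight_false_eq_gam_mul (hv : v ∈ A)
    (hden : (G.degree v + x) * t + (G.degree v + 1) * x * (1 - t) ≠ 0) :
    coarseWeight G A x t v false = gam x t (G.degree v) * ∑ b, coarseWeight G A x t v b := by
  have hd : (G.degree v : ℝ) + 1 ≠ 0 := by positivity
  rw [sum_coarseWeight_of_mem hv]
  simp only [coarseWeight, cellGain, if_pos hv, Bool.false_eq_true, if_false, gam]
  rw [div_mul_eq_mul_div, eq_div_iff hden]
  field_simp

variable [DecidableEq V]

lemma weightedSum_cellSurvival (hbip : IsBipartition G A) (hx : 1 ≤ x) (ht₀ : 0 ≤ t) (ht₁ : t ≤ 1)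
    (hv : v ∉ A) :
    weightedSum (coarseWeight G A x t) (cellSurvival G A v) =
      (1 - (∏ u ∈ G.neighborFinset v, gam x t (G.degree u)) / (G.degree v + 1)) *
        weightedSum (coarseWeight G A x t) 1 := by
  have hlow : ∀ u ∈ G.neighborFinset v, ∑ b, ({false} : Set Bool).indicator
      (coarseWeight G A x t u) b = gam x t (G.degree u) * ∑ b, coarseWeight G A x t u b := by
    intro u hu
    have huA : u ∈ A := not_not.1 fun huA =>
      hv ((hbip v u (by simpa using hu)).2 huA)
    rw [← coarseWeight_false_eq_gam_mul huA
      (gam_denom_pos hx (Nat.cast_nonneg _) ht₀ ht₁).ne']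
    simp
  rw [cellSurvival_of_notMem hv, map_sub, map_smul, weightedSum_indicator_pi _ _ _ _ hlow,
    weightedSum_one, smul_eq_mul]
  ring

lemma oneSidedBound_le_weightedSum_coarseWeight (hbip : IsBipartition G A) (hx : 1 ≤ x)
    (ht₀ : 0 ≤ t) (ht₁ : t ≤ 1) :
    oneSidedBound G A x t ≤ weightedSum (coarseWeight G A x t) (∏ v, cellSurvival G A v) := by
  have hx₀ : 0 ≤ x := zero_le_one.trans hx
  have hw : 0 ≤ coarseWeight G A x t := coarseWeight_nonneg hx₀ ht₀ ht₁
  let mean (v : V) : ℝ := if v ∈ A then 1 else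
    1 - (∏ u ∈ G.neighborFinset v, gam x t (G.degree u)) / (G.degree v + 1)
  have hmean₀ : 0 ≤ mean := fun v => by
    simp only [mean, Pi.zero_apply]
    split_ifs
    exacts [zero_le_one, one_sub_prod_gam_div_nonneg hx ht₀ ht₁ v]
  have hmean (v : V) : mean v * weightedSum (coarseWeight G A x t) 1 ≤
      weightedSum (coarseWeight G A x t) (cellSurvival G A v) := by
    by_cases hv : v ∈ A
    · simp [mean, hv, cellSurvival_of_mem]
    · simp only [mean, if_neg hv, weightedSum_cellSurvival hbip hx ht₀ ht₁ hv, le_refl]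
  calc oneSidedBound G A x t = (∏ v, mean v) * weightedSum (coarseWeight G A x t) 1 := by
        rw [weightedSum_one, ← prod_mul_distrib]
        refine prod_congr rfl fun v _ => ?_
        by_cases hv : v ∈ A
        · simp only [mean, if_pos hv, one_mul, sum_coarseWeight_of_mem hv]
        · simp only [mean, if_neg hv, sum_coarseWeight_of_notMem hv, mul_comm t]
    _ ≤ weightedSum (coarseWeight G A x t) (∏ v, cellSurvival G A v) :=
        prod_mul_weightedSum_one_le hw (fun v => cellSurvival_nonneg)
          (fun v => monotone_cellSurvival) hmean₀ hmean univ

variable {α : Type*} [Fintype α] [LinearOrder α] {μ : α → ℝ} {high : α → Bool}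

lemma weightedSum_coarseWeight_le (hbip : IsBipartition G A) (hx : 1 ≤ x) (hμ : 0 ≤ μ)
    (hμ₁ : ∑ l, μ l = 1) (hhigh : Monotone high) :
    weightedSum (coarseWeight G A x (∑ l, cellWeight μ high false l)) (∏ v, cellSurvival G A v) ≤
      weightedSum (fun _ => μ) (∏ v, activityFactor G A x v) := by
  have hmass (b : Bool) : ∑ l, cellWeight μ high b l =
      if b then 1 - ∑ l, cellWeight μ high false l else ∑ l, cellWeight μ high false l := by
    cases b
    · simp
    · rw [if_pos rfl, eq_sub_iff_add_eq, ← sum_add_distrib, ← hμ₁]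
      exact sum_congr rfl fun l _ => (Fintype.sum_bool _).symm.trans (sum_cellWeight l)
  generalize ∑ l, cellWeight μ high false l = t at hmass ⊢
  have hsplit := weightedSum_eq_sum_weightedSum (fun _ : V => cellWeight μ high)
    (∏ v, activityFactor G A x v)
  simp only [sum_cellWeight] at hsplit
  rw [hsplit, weightedSum_apply]
  refine sum_le_sum fun c _ => ?_
  by_cases hc : ∀ v ∉ A, c v = false
  · refine Eq.trans_le ?_ (prod_cell_mul_weightedSum_one_le hbip hx hμ hhigh hc)
    simp only [weightedSum_one, hmass, coarseWeight, Finset.prod_apply, prod_mul_distrib]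
    ring
  · push Not at hc
    obtain ⟨v, hv, hcv⟩ := hc
    have hdiscard : coarseWeight G A x t v (c v) = 0 := by
      simp [coarseWeight, cellGain, hv, hcv]
    rw [prod_eq_zero (mem_univ v) hdiscard, zero_mul]
    exact weightedSum_nonneg (cellWeight_nonneg hμ c)
      (prod_nonneg fun v _ => activityFactor_nonneg (zero_le_one.trans hx))

theorem oneSidedBound_le_weightedSum (hbip : IsBipartition G A) (hx : 1 ≤ x) (hμ : 0 ≤ μ)
    (hμ₁ : ∑ l, μ l = 1) (hhigh : Monotone high) :
    oneSidedBound G A x (∑ l, cellWeight μ high false l) ≤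
      weightedSum (fun _ => μ) (∏ v, activityFactor G A x v) := by
  have ht₀ : 0 ≤ ∑ l, cellWeight μ high false l :=
    sum_nonneg fun l _ => cellWeight_nonneg hμ (fun _ : Unit => false) () l
  have ht₁ : ∑ l, cellWeight μ high false l ≤ 1 := by
    rw [← hμ₁]
    refine sum_le_sum fun l _ => ?_
    unfold cellWeight
    split_ifs
    exacts [le_rfl, hμ l]
  exact (oneSidedBound_le_weightedSum_coarseWeight hbip hx ht₀ ht₁).trans
    (weightedSum_coarseWeight_le hbip hx hμ hμ₁ hhigh)

end CoarseWeights

section RandomOrder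

variable {V α : Type*} [Fintype V] [DecidableEq V] [Fintype α]

lemma sum_embedding_eq_sum_injective (F : (V → α) → ℝ) :
    ∑ f : V ↪ α, F f = ∑ f : V → α with f.Injective, F f := by
  rw [sum_subtype (p := Function.Injective) _ (by simp)]
  exact (Equiv.sum_comp (Equiv.subtypeInjectiveEquivEmbedding V α) fun f => F f).symm

lemma abs_sum_sub_sum_embedding_le {F : (V → α) → ℝ} {C : ℝ} (hF : ∀ f, |F f| ≤ C) :
    |∑ f, F f - ∑ f : V ↪ α, F f| ≤
      ((Fintype.card α : ℝ) ^ Fintype.card V -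
        (Fintype.card α).descFactorial (Fintype.card V)) * C := by
  have hsum (F : (V → α) → ℝ) :
      ∑ f, F f - ∑ f : V ↪ α, F f = ∑ f : V → α with ¬ f.Injective, F f := by
    rw [sum_embedding_eq_sum_injective, sub_eq_iff_eq_add', sum_filter_add_sum_filter_not]
  have hconst := hsum fun _ => C
  simp only [sum_const, card_univ, Fintype.card_fun, Fintype.card_embedding_eq, nsmul_eq_mul,
    ← sub_mul, Nat.cast_pow] at hconst
  rw [hconst, hsum, ← nsmul_eq_mul, ← sum_const]
  exact (abs_sum_le_sum_abs _ _).trans (sum_le_sum fun f _ => hF f)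

/-- Functions of a labelling that depend only on the relative order of the labels. -/
def OrderInvariant (F : ∀ N, (V → Fin N) → ℝ) : Prop :=
  ∀ ⦃M N⦄ (f : V → Fin M) (g : V → Fin N), (∀ u v, f u ≤ f v ↔ g u ≤ g v) → F M f = F N g

variable {F : ∀ N, (V → Fin N) → ℝ}

lemma OrderInvariant.sum_perm (hF : OrderInvariant F) {N : ℕ} (f : V ↪ Fin N) :
    ∑ σ : Equiv.Perm V, F N (f ∘ σ) = ∑ π : V ≃ Fin (Fintype.card V), F _ π := by
  let : LinearOrder V := LinearOrder.lift' f f.injective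
  let rank : V ≃o Fin (Fintype.card V) := (monoEquivOfFin V rfl).symm
  refine Fintype.sum_equiv ((Equiv.refl V).equivCongr rank.toEquiv) _ _ fun σ =>
    hF _ _ fun u v => ?_
  exact (rank.le_iff_le (x := σ u) (y := σ v)).symm

lemma OrderInvariant.sum_embedding (hF : OrderInvariant F) (N : ℕ) :
    ∑ f : V ↪ Fin N, F N f = N.descFactorial (Fintype.card V) *
      (((Fintype.card V).factorial : ℝ)⁻¹ * ∑ π : V ≃ Fin (Fintype.card V), F _ π) := by
  have hrelabel (σ : Equiv.Perm V) : ∑ f : V ↪ Fin N, F N (f ∘ σ) = ∑ f : V ↪ Fin N, F N f :=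
    Equiv.sum_comp (Equiv.embeddingCongr σ.symm (Equiv.refl _)) fun f : V ↪ Fin N => F N f
  have hfact : ((Fintype.card V).factorial : ℝ) ≠ 0 := by positivity
  rw [mul_left_comm, eq_inv_mul_iff_mul_eq₀ hfact]
  calc ((Fintype.card V).factorial : ℝ) * ∑ f : V ↪ Fin N, F N f
      = ∑ σ : Equiv.Perm V, ∑ f : V ↪ Fin N, F N (f ∘ σ) := by
        simp [hrelabel, Fintype.card_perm]
    _ = ∑ f : V ↪ Fin N, ∑ σ : Equiv.Perm V, F N (f ∘ σ) := sum_comm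
    _ = _ := by simp [hF.sum_perm, Fintype.card_embedding_eq]

lemma OrderInvariant.tendsto_weightedSum (hF : OrderInvariant F) {C : ℝ}
    (hC : ∀ N f, |F N f| ≤ C) :
    Tendsto (fun N : ℕ => weightedSum (fun (_ : V) (_ : Fin N) => (N : ℝ)⁻¹) (F N)) atTop
      (𝓝 (((Fintype.card V).factorial : ℝ)⁻¹ * ∑ π : V ≃ Fin (Fintype.card V), F _ π)) := by
  set m := Fintype.card V
  set mean : ℝ := (m.factorial : ℝ)⁻¹ * ∑ π : V ≃ Fin m, F m π
  have hratio : Tendsto (fun N : ℕ => (N.descFactorial m : ℝ) / (N : ℝ) ^ m) atTop (𝓝 1) := by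
    refine (Asymptotics.isEquivalent_iff_tendsto_one ?_).1 (isEquivalent_descFactorial m)
    filter_upwards [eventually_gt_atTop 0] with N hN
    positivity
  have herror : Tendsto (fun N : ℕ => (1 - (N.descFactorial m : ℝ) / (N : ℝ) ^ m) * C) atTop
      (𝓝 0) := by
    simpa using (hratio.const_sub 1).mul_const C
  have hmean : Tendsto (fun N : ℕ => (N.descFactorial m : ℝ) / (N : ℝ) ^ m * mean) atTop
      (𝓝 mean) := by
    simpa using hratio.mul_const mean
  refine hmean.congr_dist (squeeze_zero' (.of_forall fun _ => dist_nonneg) ?_ herror)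
  filter_upwards [eventually_gt_atTop 0] with N hN
  have hpow : (0 : ℝ) < (N : ℝ) ^ m := by positivity
  have hinjective := abs_sum_sub_sum_embedding_le (hC N)
  rw [hF.sum_embedding, Fintype.card_fin] at hinjective
  change |_ - _ * mean| ≤ ((N : ℝ) ^ m - N.descFactorial m) * C at hinjective
  have hweighted : weightedSum (fun (_ : V) (_ : Fin N) => (N : ℝ)⁻¹) (F N) =
      (∑ f, F N f) / (N : ℝ) ^ m := by
    simp [weightedSum_apply, ← mul_sum, div_eq_inv_mul, m]
  rw [dist_comm, Real.dist_eq, hweighted, div_mul_eq_mul_div, ← sub_div, abs_div, abs_of_pos hpow,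
    div_le_iff₀ hpow]
  refine hinjective.trans_eq ?_
  field_simp

end RandomOrder

section PermTutte

variable {V : Type*} {G : SimpleGraph V} {A : Set V} {x s : ℝ}

lemma IsBipartition.compl (hbip : IsBipartition G A) : IsBipartition G Aᶜ := fun u v huv =>
  not_congr (hbip u v huv)

variable [Fintype V]

lemma pow_natCard_subtype (p : V → Prop) (x : ℝ) :
    x ^ Nat.card {v // p v} = ∏ v, if p v then x else 1 := by
  rw [prod_ite, prod_const, prod_const_one, mul_one, Nat.card_eq_fintype_card,
    Fintype.card_subtype]

lemma orderInvariant_prod_activityFactor :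
    OrderInvariant fun N => ∏ v, (activityFactor G A x v : (V → Fin N) → ℝ) := fun M N f g hfg => by
  simp only [Finset.prod_apply]
  exact prod_congr rfl fun v _ => activityFactor_congr hfg

variable [DecidableEq V]

lemma permTutte_zero_right : permTutte G A x 0 = ((Fintype.card V).factorial : ℝ)⁻¹ *
    ∑ π : V ≃ Fin (Fintype.card V), ∏ v, activityFactor G A x v π := by
  unfold permTutte
  congr 1
  refine sum_congr rfl fun π _ => ?_
  rw [pow_natCard_subtype fun i => i ∈ A ∧ ∀ j, G.Adj i j → π j < π i,
    pow_natCard_subtype fun j => j ∉ A ∧ ∀ i, G.Adj j i → π i < π j, ← prod_mul_distrib]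
  refine prod_congr rfl fun v _ => ?_
  have hties : (∀ u, G.Adj v u → π u ≤ π v) ↔ ∀ u, G.Adj v u → π u < π v :=
    forall₂_congr fun u hu => (π.injective.ne hu.ne').le_iff_lt
  by_cases hv : v ∈ A <;> simp [activityFactor, hv, hties]

lemma permTutte_zero_left : permTutte G A 0 x = permTutte G Aᶜ x 0 := by
  refine congrArg _ (sum_congr rfl fun π _ => ?_)
  simp only [Set.mem_compl_iff, not_not]
  exact mul_comm _ _

lemma permTutte_zero_right_nonneg (hx : 0 ≤ x) : 0 ≤ permTutte G A x 0 := by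
  rw [permTutte_zero_right]
  exact mul_nonneg (by positivity) (sum_nonneg fun π _ => prod_nonneg fun v _ =>
    activityFactor_nonneg hx π)

lemma tendsto_weightedSum_permTutte (hx : 1 ≤ x) :
    Tendsto (fun N : ℕ => weightedSum (fun (_ : V) (_ : Fin N) => (N : ℝ)⁻¹)
      (∏ v, activityFactor G A x v)) atTop (𝓝 (permTutte G A x 0)) := by
  have hx₀ : 0 ≤ x := zero_le_one.trans hx
  rw [permTutte_zero_right]
  simp only [← Finset.prod_apply]
  refine orderInvariant_prod_activityFactor.tendsto_weightedSum (C := x ^ Fintype.card V)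
    fun N f => ?_
  rw [Finset.prod_apply, abs_of_nonneg (prod_nonneg fun v _ => activityFactor_nonneg hx₀ f)]
  exact (prod_le_prod (fun v _ => activityFactor_nonneg hx₀ f)
    fun v _ => activityFactor_le hx f).trans_eq (by simp)

variable [DecidableRel G.Adj]

lemma sum_cellWeight_floor {N : ℕ} (hs₁ : s ≤ 1) :
    ∑ l, cellWeight (fun _ : Fin N => (N : ℝ)⁻¹) (fun l => decide (⌊s * N⌋₊ ≤ l)) false l =
      ⌊s * N⌋₊ / N := by
  have hfloor : ⌊s * N⌋₊ ≤ N :=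
    Nat.floor_le_of_le (mul_le_of_le_one_left N.cast_nonneg hs₁)
  simp [cellWeight, ← sum_filter, Fin.card_filter_val_lt, hfloor, div_eq_mul_inv]

theorem oneSidedBound_le_permTutte (hbip : IsBipartition G A) (hx : 1 ≤ x) (hs₀ : 0 ≤ s)
    (hs₁ : s ≤ 1) : oneSidedBound G A x s ≤ permTutte G A x 0 := by
  have hfloor : Tendsto (fun N : ℕ => (⌊s * N⌋₊ : ℝ) / N) atTop (𝓝 s) :=
    (tendsto_nat_floor_mul_div_atTop hs₀).comp tendsto_natCast_atTop_atTop
  refine le_of_tendsto_of_tendsto ((continuousAt_oneSidedBound hx hs₀ hs₁).tendsto.comp hfloor)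
    (tendsto_weightedSum_permTutte hx) ?_
  filter_upwards [eventually_gt_atTop 0] with N hN
  rw [Function.comp_apply, ← sum_cellWeight_floor hs₁]
  refine oneSidedBound_le_weightedSum hbip hx (fun _ => by positivity) ?_ fun k l hkl => ?_
  · simp [hN.ne']
  · simp only [Bool.le_iff_imp, decide_eq_true_eq]
    exact fun hk => hk.trans hkl

end PermTutte

theorem permTutte_mul_ge_prod_Gfun_general
    {V : Type*} [Fintype V] [DecidableEq V] (G : SimpleGraph V) [DecidableRel G.Adj]
    (A : Set V) (hbip : IsBipartition G A) (δ : ℝ) (hδ : 0 ≤ δ) (hdeg : ∀ v : V, δ ≤ G.degree v)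
    (x s : ℝ) (hx : 1 ≤ x) (hs₀ : 0 ≤ s) (hs₁ : s ≤ 1) :
    permTutte G A x 0 * permTutte G A 0 x ≥ ∏ v : V, Gfun (G.degree v) x s (gam x s δ) ∧
    (∏ v : V, Gfun (G.degree v) x s (gam x s δ)) ≥ ∏ v : V, Gfun (G.degree v) x s s := by
  have hx₀ : 0 ≤ x := zero_le_one.trans hx
  constructor
  · calc ∏ v : V, Gfun (G.degree v) x s (gam x s δ)
        ≤ oneSidedBound G A x s * oneSidedBound G Aᶜ x s :=
          prod_Gfun_le_oneSidedBound_mul hδ hdeg hx hs₀ hs₁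
      _ ≤ permTutte G A x 0 * permTutte G Aᶜ x 0 :=
          mul_le_mul (oneSidedBound_le_permTutte hbip hx hs₀ hs₁)
            (oneSidedBound_le_permTutte hbip.compl hx hs₀ hs₁) (oneSidedBound_nonneg hx hs₀ hs₁)
            (permTutte_zero_right_nonneg hx₀)
      _ = permTutte G A x 0 * permTutte G A 0 x := by rw [permTutte_zero_left]
  · exact prod_le_prod (fun v _ => Gfun_nonneg hx₀ hs₀ hs₁ hs₀ hs₁) fun v _ =>
      Gfun_antitoneOn _ hx₀ hs₀ hs₁ (gam_nonneg hx hδ hs₀ hs₁) hs₀ (gam_le_self hx hδ hs₀ hs₁)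

/-- If `H` is bipartite with minimum degree at least `δ ≥ 1`, `x ≥ 2` and `0 ≤ s ≤ 1`, then
`T̃_H(x,0)·T̃_H(0,x) ≥ Π_v G(d_v,x,s,γ_{x,s}(δ)) ≥ Π_v G(d_v,x,s,s)`. -/
theorem permTutte_mul_ge_prod_Gfun
    {V : Type*} [Fintype V] [DecidableEq V] (G : SimpleGraph V) [DecidableRel G.Adj]
    (A : Set V) (hbip : IsBipartition G A) (δ : ℕ) (hδ : 1 ≤ δ)
    (hdeg : ∀ v : V, δ ≤ G.degree v)
    (x s : ℝ) (hx : 2 ≤ x) (hs0 : 0 ≤ s) (hs1 : s ≤ 1) :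
    permTutte G A x 0 * permTutte G A 0 x ≥
        ∏ v : V, Gfun (G.degree v) x s (gam x s (δ : ℝ)) ∧
    (∏ v : V, Gfun (G.degree v) x s (gam x s (δ : ℝ))) ≥
        ∏ v : V, Gfun (G.degree v) x s s :=
  permTutte_mul_ge_prod_Gfun_general G A hbip δ δ.cast_nonneg (fun v => Nat.cast_le.2 (hdeg v))
    x s (one_le_two.trans hx) hs0 hs1
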